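/- Let σ be drawn from the weighted Curie–Weiss Gibbs measure and let (σ,σ') be the exchangeable pair obtained by resampling the spins at a uniformly chosen edge. Then E[(M − M')² | σ] = L₂(m(σ)) + R₂(m(σ)), where R₂ is a function on [0,1] satisfying |R₂(m)| ≤ K/N for all m ∈ [0,1], for a constant K depending only on (J,h) and not on N. -/

import Mathlib

open Real Finset MeasureTheory

noncomputable section

/-- Dimer configurations (matchings of the complete graph on `Fin N`), encoded as
involutions of `Fin N`: fixed points are monomers, 2-cycles are dimers. -/
abbrev Dimer (N : ℕ) := {f : Fin N → Fin N // ∀ i, f (f i) = i}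

/-- The set of monomers (dimer-free vertices) of a dimer configuration. -/
def monomers {N : ℕ} (D : Dimer N) : Finset (Fin N) :=
  Finset.univ.filter fun i => D.1 i = i

/-- Monomer density `m(D) = |𝓜(D)|/N`. -/
def mDim {N : ℕ} (D : Dimer N) : ℝ := ((monomers D).card : ℝ) / N

/-- The parameter `b = (log N)/2 + h - J`. -/
def bIMD (N : ℕ) (J h : ℝ) : ℝ := Real.log N / 2 + h - J

/-- The Gibbs weight `exp(-H(D)) = exp(N (a m(D)^2 + b m(D)))` with `a = J`. -/
def wDim (N : ℕ) (J h : ℝ) (D : Dimer N) : ℝ :=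
  Real.exp (N * (J * mDim D ^ 2 + bIMD N J h * mDim D))

/-- The probability of an event `A` under the IMD Gibbs measure. -/
def probDim (N : ℕ) (J h : ℝ) (A : Dimer N → Prop) : ℝ :=
  (∑ D : Dimer N, Set.indicator {D | A D} (wDim N J h) D) / ∑ D : Dimer N, wDim N J h D

/-- The conditional probability `ℙ(A | B)` under the IMD Gibbs measure. -/
def condProbDim (N : ℕ) (J h : ℝ) (A B : Dimer N → Prop) : ℝ :=
  (∑ D : Dimer N, Set.indicator {D | A D ∧ B D} (wDim N J h) D) /
    ∑ D : Dimer N, Set.indicator {D | B D} (wDim N J h) D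

/-- `g(x) = (√(e^{4x} + 4 e^{2x}) - e^{2x})/2`. -/
def gFun (x : ℝ) : ℝ := (Real.sqrt (Real.exp (4*x) + 4 * Real.exp (2*x)) - Real.exp (2*x)) / 2

/-- `τ(x) = (2x-1)J + h`. -/
def tauFun (J h x : ℝ) : ℝ := (2*x - 1) * J + h

/-- `𝑝̃(m) = -J m² - (1 - g(τ(m)) + log(1 - g(τ(m))))/2`. -/
def ptilde (J h m : ℝ) : ℝ :=
  -J * m^2 - (1 - gFun (tauFun J h m) + Real.log (1 - gFun (tauFun J h m))) / 2

/-- The CDF of a centered Gaussian with variance `v`, evaluated at `z`. -/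
def gaussCDF (v : ℝ) (z : ℝ) : ℝ :=
  (ProbabilityTheory.gaussianReal 0 (Real.toNNReal v) (Set.Iic z)).toReal

/-- Spin configurations `Σ = {0,1}^N`. -/
abbrev Config (N : ℕ) := Fin N → Bool

/-- `𝓐(σ) = {i : σ_i = 1}`. -/
def ASet {N : ℕ} (σ : Config N) : Finset (Fin N) := Finset.univ.filter fun i => σ i = true

/-- `M(σ) = ∑ σ_i`. -/
def Msum {N : ℕ} (σ : Config N) : ℕ := (ASet σ).card

/-- Magnetization `m(σ) = M(σ)/N`. -/
def mConf {N : ℕ} (σ : Config N) : ℝ := (Msum σ : ℝ) / N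

/-- `D(σ)`: the number of dimer configurations `D` with `𝓜(D) = 𝓐(σ)`. -/
def Dcount (N : ℕ) (σ : Config N) : ℕ :=
  (Finset.univ.filter fun D : Dimer N => monomers D = ASet σ).card

/-- The weight `D(σ) exp(-H(σ))` of the weighted Curie–Weiss model. -/
def wConf (N : ℕ) (J h : ℝ) (σ : Config N) : ℝ :=
  (Dcount N σ : ℝ) * Real.exp (N * (J * mConf σ ^ 2 + bIMD N J h * mConf σ))

/-- The probability of an event `A` under the weighted Curie–Weiss Gibbs measure. -/
def probConf (N : ℕ) (J h : ℝ) (A : Config N → Prop) : ℝ :=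
  (∑ σ : Config N, Set.indicator {σ | A σ} (wConf N J h) σ) / ∑ σ : Config N, wConf N J h σ

/-- Expectation under the weighted Curie–Weiss Gibbs measure. -/
def EConf (N : ℕ) (J h : ℝ) (f : Config N → ℝ) : ℝ :=
  (∑ σ : Config N, wConf N J h σ * f σ) / ∑ σ : Config N, wConf N J h σ

/-- `L₁(m) = 2(1-m)(m² - (1-m)e^{2τ(m)})/((1-m) + e^{2τ(m)})`. -/
def Lone (J h m : ℝ) : ℝ :=
  2*(1-m)*(m^2 - (1-m)*Real.exp (2 * tauFun J h m)) / ((1-m) + Real.exp (2 * tauFun J h m))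

/-- `L₂(m) = 4(1-m)(m² + (1-m)e^{2τ(m)})/((1-m) + e^{2τ(m)})`. -/
def Ltwo (J h m : ℝ) : ℝ :=
  4*(1-m)*(m^2 + (1-m)*Real.exp (2 * tauFun J h m)) / ((1-m) + Real.exp (2 * tauFun J h m))

/-- The configuration obtained from `σ` by setting the spins at `u, v` to `s, t`. -/
def upd {N : ℕ} (σ : Config N) (u v : Fin N) (s t : Bool) : Config N :=
  fun i => if i = u then s else if i = v then t else σ i

/-- The edges of the complete graph, enumerated as ordered pairs `u < v`. -/
def cEdges (N : ℕ) : Finset (Fin N × Fin N) := Finset.univ.filter fun p => p.1 < p.2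

/-- The probability of resampling the pair of spins at `(u,v)` to `(s,t)`:
the conditional distribution of `(σ_u, σ_v)` given `(σ_i)_{i ≠ u,v}`. -/
def qCond (N : ℕ) (J h : ℝ) (σ : Config N) (u v : Fin N) (s t : Bool) : ℝ :=
  wConf N J h (upd σ u v s t) / ∑ st : Bool × Bool, wConf N J h (upd σ u v st.1 st.2)

/-- `E[F(σ, σ') | σ]` for the exchangeable pair `(σ, σ')` obtained by resampling the
spins at a uniformly chosen edge. -/
def condE2 (N : ℕ) (J h : ℝ) (F : Config N → Config N → ℝ) (σ : Config N) : ℝ :=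
  ((cEdges N).card : ℝ)⁻¹ * ∑ p ∈ cEdges N, ∑ st : Bool × Bool,
    qCond N J h σ p.1 p.2 st.1 st.2 * F σ (upd σ p.1 p.2 st.1 st.2)

/-- The weight of the Gibbs measure conditioned on the event `S`. -/
def wCond (N : ℕ) (J h : ℝ) (S : Config N → Prop) (σ : Config N) : ℝ :=
  Set.indicator {σ | S σ} (wConf N J h) σ

/-- `ℙ_ℓ(A) = ℙ(A | S)`, probability under the conditioned Gibbs measure. -/
def probL (N : ℕ) (J h : ℝ) (S A : Config N → Prop) : ℝ :=
  (∑ σ : Config N, Set.indicator {σ | A σ} (wCond N J h S) σ) / ∑ σ : Config N, wCond N J h S σ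

/-- Expectation under the conditioned Gibbs measure `ℙ(·|S)`. -/
def EL (N : ℕ) (J h : ℝ) (S : Config N → Prop) (f : Config N → ℝ) : ℝ :=
  (∑ σ : Config N, wCond N J h S σ * f σ) / ∑ σ : Config N, wCond N J h S σ

/-- Resampling probability for the conditioned measure `ℙ(·|S)`. -/
def qCondL (N : ℕ) (J h : ℝ) (S : Config N → Prop) (σ : Config N) (u v : Fin N)
    (s t : Bool) : ℝ :=
  wCond N J h S (upd σ u v s t) / ∑ st : Bool × Bool, wCond N J h S (upd σ u v st.1 st.2)

/-- `E_ℓ[F(σ, σ') | σ]` for the exchangeable pair under the conditioned measure. -/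
def condE2L (N : ℕ) (J h : ℝ) (S : Config N → Prop) (F : Config N → Config N → ℝ)
    (σ : Config N) : ℝ :=
  ((cEdges N).card : ℝ)⁻¹ * ∑ p ∈ cEdges N, ∑ st : Bool × Bool,
    qCondL N J h S σ p.1 p.2 st.1 st.2 * F σ (upd σ p.1 p.2 st.1 st.2)

/-- The maximizer set `O` of `𝑝̃` on `[0,1]`. -/
def maxSet (J h : ℝ) : Set ℝ :=
  {x | x ∈ Set.Icc (0:ℝ) 1 ∧ ∀ y ∈ Set.Icc (0:ℝ) 1, ptilde J h y ≤ ptilde J h x}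

end

/-! The weight of a configuration vanishes if its number of down-spins is odd, so resampling an
edge either leaves `M` unchanged or flips two equal spins, in which case `(M - M')² = 4`. If `ω(k)`
is the weight of a configuration with `k` up-spins, `ω(k) e^{2τ((k+1)/N)} = ω(k+2) (1 - (k+1)/N)`.
With `φ(x) = (1-x) / ((1-x) + e^{2τ(x)})`, two up-spins are therefore flipped with probability
`φ(m - 1/N)` and two down-spins with probability `1 - φ(m + 1/N)`, while the proportions of
up-up and down-down edges are `m² + O(1/N)` and `(1-m)² + O(1/N)`. It remains to observe that
`L₂(m) = 4 (m² φ(m) + (1-m)² (1 - φ(m)))` and that `φ` is Lipschitz on `[0,1]`. -/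

section MatchingCount

open scoped Nat

/-- The number of perfect matchings of the complete graph on `n` vertices. -/
def matchingCount (n : ℕ) : ℕ := if Even n then (n - 1)‼ else 0

theorem matchingCount_ne_zero_iff {n : ℕ} : matchingCount n ≠ 0 ↔ Even n := by
  simp [matchingCount, (Nat.doubleFactorial_pos _).ne']

theorem matchingCount_succ (n : ℕ) : matchingCount (n + 1) = n * matchingCount (n - 1) := by
  cases n with
  | zero => simp [matchingCount]
  | succ n => simp [matchingCount, Nat.even_add_one, Nat.doubleFactorial_add_one]

end MatchingCount

section Dimers

variable {N : ℕ}

theorem mem_monomers {D : Dimer N} {i : Fin N} : i ∈ monomers D ↔ D.1 i = i := by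
  simp [monomers]

namespace Dimer

variable {D : Dimer N} {u w : Fin N}

theorem involutive (D : Dimer N) : Function.Involutive D.1 := D.2

theorem commute_swap_of_apply_eq (h : D.1 u = w) : Function.Commute D.1 (Equiv.swap u w) := by
  intro i
  rw [D.involutive.injective.map_swap, h, ← D.involutive.eq_iff.1 h, Equiv.swap_comm]

theorem commute_swap_of_mem_monomers (hu : u ∈ monomers D) (hw : w ∈ monomers D) :
    Function.Commute D.1 (Equiv.swap u w) := by
  intro i
  rw [D.involutive.injective.map_swap, mem_monomers.1 hu, mem_monomers.1 hw]

/-- The dimer configuration `D` with the edge `uw` removed if it is a dimer of `D`, and added if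
`u` and `w` are monomers of `D`. In both cases `D` commutes with the transposition of `u` and
`w`. -/
def toggle (D : Dimer N) (h : Function.Commute D.1 (Equiv.swap u w)) : Dimer N :=
  ⟨Equiv.swap u w ∘ D.1, fun i => by simp [h.eq _, D.2 i]⟩

theorem toggle_apply (h : Function.Commute D.1 (Equiv.swap u w)) (i : Fin N) :
    (D.toggle h).1 i = Equiv.swap u w (D.1 i) := rfl

theorem toggle_toggle (h : Function.Commute D.1 (Equiv.swap u w))
    (h' : Function.Commute (D.toggle h).1 (Equiv.swap u w)) : (D.toggle h).toggle h' = D :=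
  Subtype.ext <| funext fun _ => Equiv.swap_apply_self _ _ _

theorem monomers_toggle_of_apply_eq (h : D.1 u = w) :
    monomers (D.toggle (commute_swap_of_apply_eq h)) = insert u (insert w (monomers D)) := by
  ext i
  have hw : D.1 w = u := (D.involutive.eq_iff.1 h).symm
  have hi := D.2 i
  simp only [mem_monomers, mem_insert, toggle_apply, Equiv.swap_apply_def]
  grind

theorem monomers_toggle_of_mem_monomers (hu : u ∈ monomers D) (hw : w ∈ monomers D) (huw : u ≠ w) :
    monomers (D.toggle (commute_swap_of_mem_monomers hu hw)) = ((monomers D).erase u).erase w := by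
  ext i
  have hi := D.2 i
  rw [mem_monomers] at hu hw
  simp only [mem_monomers, mem_erase, toggle_apply, Equiv.swap_apply_def]
  grind

end Dimer

theorem card_monomers_eq_and_apply_eq {B : Finset (Fin N)} {u w : Fin N} (hu : u ∉ B) (hw : w ∉ B)
    (huw : u ≠ w) :
    #{D : Dimer N | monomers D = B ∧ D.1 u = w} =
      #{D : Dimer N | monomers D = insert u (insert w B)} := by
  have hmem {D : Dimer N} (hD : D ∈ ({D | monomers D = insert u (insert w B)} : Finset (Dimer N))) :
      u ∈ monomers D ∧ w ∈ monomers D := by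
    simp [(mem_filter.1 hD).2]
  refine card_bij' (fun D hD => D.toggle (Dimer.commute_swap_of_apply_eq (mem_filter.1 hD).2.2))
    (fun D hD => D.toggle (Dimer.commute_swap_of_mem_monomers (hmem hD).1 (hmem hD).2))
    (fun D hD => ?_) (fun D hD => ?_) (fun D _ => Dimer.toggle_toggle _ _)
    (fun D _ => Dimer.toggle_toggle _ _)
  · obtain ⟨-, hB, huD⟩ := mem_filter.1 hD
    exact (mem_filter_univ _).2 <| by rw [Dimer.monomers_toggle_of_apply_eq huD, hB]
  · obtain ⟨huD, hwD⟩ := hmem hD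
    refine (mem_filter_univ _).2 ⟨?_, ?_⟩
    · rw [Dimer.monomers_toggle_of_mem_monomers huD hwD huw, (mem_filter.1 hD).2,
        erase_insert (by simp [hu, huw]), erase_insert hw]
    · rw [Dimer.toggle_apply, mem_monomers.1 huD, Equiv.swap_apply_left]

theorem card_monomers_eq_univ : #{D : Dimer N | monomers D = univ} = 1 := by
  refine card_eq_one.2 ⟨⟨id, fun _ => rfl⟩, ?_⟩
  ext D
  simp only [mem_filter_univ, mem_singleton, eq_univ_iff_forall, mem_monomers, Subtype.ext_iff,
    funext_iff, id]

theorem card_monomers_eq (B : Finset (Fin N)) :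
    #{D : Dimer N | monomers D = B} = matchingCount #Bᶜ := by
  induction hn : #Bᶜ using Nat.strong_induction_on generalizing B with
  | _ n ih
  cases n with
  | zero =>
    obtain rfl : B = univ := by simpa using hn
    exact card_monomers_eq_univ
  | succ n =>
    obtain ⟨u, hu⟩ : Bᶜ.Nonempty := card_pos.1 (by omega)
    have partner_mem : ∀ D ∈ ({D | monomers D = B} : Finset (Dimer N)), D.1 u ∈ Bᶜ.erase u := by
      intro D hD
      obtain rfl := (mem_filter.1 hD).2
      have hDu : D.1 u ≠ u := by simpa [mem_monomers] using hu
      simp [mem_monomers, D.2 u, hDu, hDu.symm]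
    have card_fiber : ∀ w ∈ Bᶜ.erase u,
        #{D ∈ ({D | monomers D = B} : Finset (Dimer N)) | D.1 u = w} = matchingCount (n - 1) := by
      intro w hw
      obtain ⟨hwu, hwB⟩ := mem_erase.1 hw
      have hcard : #(insert u (insert w B))ᶜ = n - 1 := by
        rw [compl_insert, compl_insert, erase_right_comm, card_erase_of_mem
          (mem_erase.2 ⟨hwu, hwB⟩), card_erase_of_mem hu, hn, Nat.add_sub_cancel]
      rw [filter_filter, card_monomers_eq_and_apply_eq (mem_compl.1 hu) (mem_compl.1 hwB) hwu.symm,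
        ih (n - 1) (by omega) _ hcard]
    rw [card_eq_sum_card_fiberwise partner_mem, sum_congr rfl card_fiber, sum_const,
      card_erase_of_mem hu, hn, Nat.add_sub_cancel, smul_eq_mul, matchingCount_succ]

end Dimers

section Magnetization

variable {N : ℕ} (σ : Config N)

theorem Msum_le : Msum σ ≤ N := by
  simpa [Msum] using card_le_univ (ASet σ)

theorem card_compl_ASet : #(ASet σ)ᶜ = N - Msum σ := by
  rw [card_compl, Fintype.card_fin, Msum]

theorem Dcount_eq_matchingCount : Dcount N σ = matchingCount (N - Msum σ) := by
  rw [Dcount, card_monomers_eq, card_compl_ASet]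

theorem Msum_eq_sum_toNat : Msum σ = ∑ i, (σ i).toNat := by
  rw [Msum, ASet, card_filter]
  exact sum_congr rfl fun i _ => by cases σ i <;> rfl

theorem Msum_update (u : Fin N) (s : Bool) :
    Msum (Function.update σ u s) + (σ u).toNat = Msum σ + s.toNat := by
  rw [Msum_eq_sum_toNat, Msum_eq_sum_toNat, ← add_sum_erase _ _ (mem_univ u),
    ← add_sum_erase _ (fun i => (σ i).toNat) (mem_univ u),
    sum_congr rfl fun i hi => by rw [Function.update_of_ne (ne_of_mem_erase hi)],
    Function.update_self]
  ring

theorem upd_eq_update (u v : Fin N) (s t : Bool) :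
    upd σ u v s t = Function.update (Function.update σ v t) u s := by
  ext i
  simp [upd, Function.update_apply]

theorem Msum_upd {u v : Fin N} (huv : u ≠ v) (s t : Bool) :
    Msum (upd σ u v s t) + (σ u).toNat + (σ v).toNat = Msum σ + s.toNat + t.toNat := by
  have hu := Msum_update (Function.update σ v t) u s
  have hv := Msum_update σ v t
  rw [Function.update_of_ne huv] at hu
  rw [upd_eq_update]
  omega

end Magnetization

section EdgeCount

variable {N : ℕ}

theorem card_cEdges_filter_mem (A : Finset (Fin N)) :
    #{p ∈ cEdges N | p.1 ∈ A ∧ p.2 ∈ A} = (#A).choose 2 := by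
  rw [← card_product_filter_lt]
  congr 1
  ext p
  simp only [cEdges, mem_filter, mem_univ, mem_product, true_and, and_comm]

theorem card_cEdges : #(cEdges N) = N.choose 2 := by
  simpa using card_cEdges_filter_mem (univ : Finset (Fin N))

/-- The proportion of edges of the complete graph on `N` vertices with both ends in a given set of
`N * x` vertices. -/
noncomputable def edgeFraction (N : ℕ) (x : ℝ) : ℝ := x * (N * x - 1) / (N - 1)

theorem inv_card_cEdges_mul_card_filter_mem (hN : N ≠ 0) (A : Finset (Fin N)) :
    (#(cEdges N) : ℝ)⁻¹ * #{p ∈ cEdges N | p.1 ∈ A ∧ p.2 ∈ A} = edgeFraction N (#A / N) := by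
  rw [card_cEdges_filter_mem, card_cEdges, Nat.cast_choose_two, Nat.cast_choose_two, edgeFraction,
    mul_div_cancel₀ _ (Nat.cast_ne_zero.2 hN)]
  simp only [div_eq_mul_inv, mul_inv, inv_inv]
  ring

theorem abs_edgeFraction_sub_sq_le (hN : 1 ≤ N) {x : ℝ} (hx : x ∈ Set.Icc (0 : ℝ) 1) :
    |edgeFraction N x - x ^ 2| ≤ 1 / N := by
  obtain ⟨hx0, hx1⟩ := hx
  rcases hN.eq_or_lt with rfl | hN
  · simpa [edgeFraction] using abs_le_one_iff_mul_self_le_one.2 (by nlinarith)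
  have hN2 : (2 : ℝ) ≤ N := by exact_mod_cast hN
  have hN1 : (0 : ℝ) < N - 1 := by linarith
  have hsub : edgeFraction N x - x ^ 2 = -(x * (1 - x) / (N - 1)) := by
    rw [edgeFraction]
    field_simp
    ring
  have hvar : 0 ≤ x * (1 - x) := mul_nonneg hx0 (sub_nonneg.2 hx1)
  rw [hsub, abs_neg, abs_of_nonneg (div_nonneg hvar hN1.le), div_le_div_iff₀ hN1 (by linarith)]
  nlinarith [sq_nonneg (2 * x - 1)]

end EdgeCount

section Weights

variable {N : ℕ} {J h : ℝ}

/-- The weight of a configuration with `k` up-spins. -/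
noncomputable def levelWeight (N : ℕ) (J h : ℝ) (k : ℕ) : ℝ :=
  matchingCount (N - k) * exp (N * (J * ((k : ℝ) / N) ^ 2 + bIMD N J h * (k / N)))

theorem wConf_eq_levelWeight (σ : Config N) : wConf N J h σ = levelWeight N J h (Msum σ) := by
  rw [wConf, Dcount_eq_matchingCount, levelWeight, mConf]

theorem levelWeight_nonneg (k : ℕ) : 0 ≤ levelWeight N J h k := by
  unfold levelWeight
  positivity

theorem wConf_ne_zero_iff {σ : Config N} : wConf N J h σ ≠ 0 ↔ Even (N - Msum σ) := by
  rw [wConf_eq_levelWeight, levelWeight, mul_ne_zero_iff_right (exp_pos _).ne', Nat.cast_ne_zero,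
    matchingCount_ne_zero_iff]

theorem levelWeight_mul_exp {k : ℕ} (hk : k + 2 ≤ N) :
    levelWeight N J h k * exp (2 * tauFun J h ((k + 1) / N)) =
      levelWeight N J h (k + 2) * (1 - (k + 1) / N) := by
  have hN : (0 : ℝ) < N := by exact_mod_cast (by omega : 0 < N)
  have hcount : (matchingCount (N - k) : ℝ) = (N - k - 1) * matchingCount (N - (k + 2)) := by
    obtain ⟨n, rfl⟩ := Nat.exists_eq_add_of_le hk
    rw [show k + 2 + n - k = n + 1 + 1 by omega, Nat.add_sub_cancel_left, matchingCount_succ]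
    push_cast
    ring
  have hexponent : N * (J * (((k + 2 : ℕ) : ℝ) / N) ^ 2 + bIMD N J h * ((k + 2 : ℕ) / N)) =
      N * (J * ((k : ℝ) / N) ^ 2 + bIMD N J h * (k / N)) + 2 * tauFun J h ((k + 1) / N) +
        log N := by
    rw [bIMD, tauFun]
    push_cast
    field_simp
    ring
  rw [levelWeight, levelWeight, hcount, hexponent, exp_add, exp_add, exp_log hN]
  field_simp
  ring

/-- The probability that a pair of vertices carries two down-spins rather than two up-spins, given
the other spins and that the two spins agree; here `x` is the average of the two possible
magnetizations. -/
noncomputable def downProb (J h x : ℝ) : ℝ := (1 - x) / ((1 - x) + exp (2 * tauFun J h x))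

theorem levelWeight_div_add {k : ℕ} (hk : k + 2 ≤ N) (hpos : 0 < levelWeight N J h k) :
    levelWeight N J h k / (levelWeight N J h k + levelWeight N J h (k + 2)) =
      downProb J h ((k + 1) / N) := by
  have hx : ((k : ℝ) + 1) / N ≤ 1 := div_le_one_of_le₀ (by exact_mod_cast (by omega)) N.cast_nonneg
  have hpos' := levelWeight_nonneg (N := N) (J := J) (h := h) (k + 2)
  have hden : 0 < (1 - ((k : ℝ) + 1) / N) + exp (2 * tauFun J h ((k + 1) / N)) :=
    add_pos_of_nonneg_of_pos (sub_nonneg.2 hx) (exp_pos _)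
  rw [downProb, div_eq_div_iff (by positivity) hden.ne']
  linear_combination levelWeight_mul_exp (J := J) (h := h) hk

end Weights

section Resampling

variable {N : ℕ} {J h : ℝ} {σ : Config N} {u v : Fin N}

theorem upd_self (σ : Config N) (u v : Fin N) : upd σ u v (σ u) (σ v) = σ := by
  rw [upd_eq_update, Function.update_eq_self, Function.update_eq_self]

theorem wConf_upd_eq_zero (hσ : wConf N J h σ ≠ 0) (huv : u ≠ v) {s t : Bool}
    (hst : (s ^^ t) ≠ (σ u ^^ σ v)) : wConf N J h (upd σ u v s t) = 0 := by
  by_contra hw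
  have hM := Msum_upd σ huv s t
  have hle := Msum_le σ
  have hle' := Msum_le (upd σ u v s t)
  rw [← ne_eq, wConf_ne_zero_iff] at hw
  rw [wConf_ne_zero_iff] at hσ
  revert hst hM
  cases s <;> cases t <;> cases σ u <;> cases σ v <;> simp <;> grind

/-- The conditional expectation of `(M - M')²` given `σ`, when the edge `uv` is resampled. -/
noncomputable def edgeSecondMoment (N : ℕ) (J h : ℝ) (σ : Config N) (u v : Fin N) : ℝ :=
  ∑ st : Bool × Bool, qCond N J h σ u v st.1 st.2 *
    ((Msum σ : ℝ) - Msum (upd σ u v st.1 st.2)) ^ 2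

theorem edgeSecondMoment_of_ne (hσ : wConf N J h σ ≠ 0) (huv : u ≠ v) (hs : σ u ≠ σ v) :
    edgeSecondMoment N J h σ u v = 0 := by
  refine sum_eq_zero fun ⟨s, t⟩ _ => ?_
  by_cases hst : s = t
  · have hw : wConf N J h (upd σ u v s t) = 0 :=
      wConf_upd_eq_zero hσ huv (by simpa [hst] using hs)
    simp [qCond, hw]
  · have hM : Msum (upd σ u v s t) = Msum σ := by
      have := Msum_upd σ huv s t
      revert this hst hs
      cases s <;> cases t <;> cases σ u <;> cases σ v <;> simp
    simp [hM]

theorem edgeSecondMoment_of_eq (hσ : wConf N J h σ ≠ 0) (huv : u ≠ v) {s : Bool} (hu : σ u = s)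
    (hv : σ v = s) :
    edgeSecondMoment N J h σ u v = 4 * (wConf N J h (upd σ u v (!s) (!s)) /
      (wConf N J h σ + wConf N J h (upd σ u v (!s) (!s)))) := by
  have hself : upd σ u v s s = σ := by simpa only [hu, hv] using upd_self σ u v
  have hmixed (t : Bool) : wConf N J h (upd σ u v t (!t)) = 0 :=
    wConf_upd_eq_zero hσ huv (by simp [hu, hv])
  have hjump : ((Msum σ : ℝ) - Msum (upd σ u v (!s) (!s))) ^ 2 = 4 := by
    have hM := congrArg (Nat.cast (R := ℝ)) (Msum_upd σ huv (!s) (!s))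
    push_cast [hu, hv] at hM
    have hflip : ((s.toNat : ℝ) - (!s).toNat) ^ 2 = 1 := by cases s <;> simp
    linear_combination ((Msum σ : ℝ) - Msum (upd σ u v (!s) (!s)) +
      2 * ((s.toNat : ℝ) - (!s).toNat)) * -hM + 4 * hflip
  cases s <;>
    simp_all [edgeSecondMoment, qCond, Fintype.sum_prod_type, mul_comm, add_comm]

theorem edgeSecondMoment_of_up (hσ : wConf N J h σ ≠ 0) (huv : u ≠ v) (hu : σ u = true)
    (hv : σ v = true) :
    edgeSecondMoment N J h σ u v = 4 * downProb J h (mConf σ - 1 / N) := by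
  have hM : Msum (upd σ u v false false) + 2 = Msum σ := by
    simpa [hu, hv] using Msum_upd σ huv false false
  have hle : Msum (upd σ u v false false) + 2 ≤ N := hM ▸ Msum_le σ
  have hpos : 0 < levelWeight N J h (Msum (upd σ u v false false)) := by
    rw [wConf_ne_zero_iff] at hσ
    refine (levelWeight_nonneg _).lt_of_ne' ?_
    rw [← wConf_eq_levelWeight, wConf_ne_zero_iff]
    grind
  rw [edgeSecondMoment_of_eq hσ huv hu hv, wConf_eq_levelWeight, wConf_eq_levelWeight, ← hM,
    Bool.not_true, add_comm (levelWeight N J h (_ + 2)), levelWeight_div_add hle hpos, mConf, ← hM]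
  congr 2
  push_cast
  ring

theorem edgeSecondMoment_of_down (hσ : wConf N J h σ ≠ 0) (huv : u ≠ v) (hu : σ u = false)
    (hv : σ v = false) :
    edgeSecondMoment N J h σ u v = 4 * (1 - downProb J h (mConf σ + 1 / N)) := by
  have hM : Msum (upd σ u v true true) = Msum σ + 2 := by
    simpa [hu, hv] using Msum_upd σ huv true true
  have hle : Msum σ + 2 ≤ N := hM ▸ Msum_le _
  have hpos : 0 < levelWeight N J h (Msum σ) :=
    (levelWeight_nonneg _).lt_of_ne' (wConf_eq_levelWeight σ ▸ hσ)
  have hpos' := levelWeight_nonneg (N := N) (J := J) (h := h) (Msum σ + 2)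
  rw [edgeSecondMoment_of_eq hσ huv hu hv, wConf_eq_levelWeight, wConf_eq_levelWeight,
    Bool.not_false, hM, mConf, ← add_div, ← levelWeight_div_add hle hpos,
    one_sub_div (by positivity), add_sub_cancel_left]

theorem edgeSecondMoment_eq (hσ : wConf N J h σ ≠ 0) (huv : u ≠ v) :
    edgeSecondMoment N J h σ u v =
      (if u ∈ ASet σ ∧ v ∈ ASet σ then 4 * downProb J h (mConf σ - 1 / N) else 0) +
      (if u ∈ (ASet σ)ᶜ ∧ v ∈ (ASet σ)ᶜ then 4 * (1 - downProb J h (mConf σ + 1 / N)) else 0) := by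
  cases hu : σ u <;> cases hv : σ v
  · simp [ASet, hu, hv, edgeSecondMoment_of_down hσ huv hu hv]
  · simp [ASet, hu, hv, edgeSecondMoment_of_ne hσ huv]
  · simp [ASet, hu, hv, edgeSecondMoment_of_ne hσ huv]
  · simp [ASet, hu, hv, edgeSecondMoment_of_up hσ huv hu hv]

theorem condE2_eq_edgeFraction (hN : N ≠ 0) (hσ : wConf N J h σ ≠ 0) :
    condE2 N J h (fun σ σ' => ((Msum σ : ℝ) - (Msum σ' : ℝ)) ^ 2) σ =
      4 * (edgeFraction N (mConf σ) * downProb J h (mConf σ - 1 / N) +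
        edgeFraction N (1 - mConf σ) * (1 - downProb J h (mConf σ + 1 / N))) := by
  have hedge : ∀ p ∈ cEdges N, edgeSecondMoment N J h σ p.1 p.2 = _ := fun p hp =>
    edgeSecondMoment_eq hσ (mem_filter.1 hp).2.ne
  have hcompl : (#(ASet σ)ᶜ : ℝ) / N = 1 - mConf σ := by
    rw [card_compl_ASet, Nat.cast_sub (Msum_le σ), sub_div, div_self (Nat.cast_ne_zero.2 hN), mConf]
  rw [← hcompl, mConf, Msum, ← inv_card_cEdges_mul_card_filter_mem hN,
    ← inv_card_cEdges_mul_card_filter_mem hN]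
  change _ * ∑ p ∈ cEdges N, edgeSecondMoment N J h σ p.1 p.2 = _
  rw [sum_congr rfl hedge, sum_add_distrib, ← sum_filter, ← sum_filter, sum_const, sum_const,
    nsmul_eq_mul, nsmul_eq_mul, mConf, Msum]
  ring

end Resampling

section Remainder

variable {N : ℕ} {J h : ℝ}

theorem contDiffOn_downProb : ContDiffOn ℝ 1 (downProb J h) (Set.Icc 0 1) := by
  unfold downProb tauFun
  refine ContDiffOn.div (by fun_prop) (by fun_prop) fun x hx => ?_
  exact (add_pos_of_nonneg_of_pos (sub_nonneg.2 hx.2) (exp_pos _)).ne'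

theorem downProb_mem_Icc {x : ℝ} (hx : x ≤ 1) : downProb J h x ∈ Set.Icc (0 : ℝ) 1 := by
  have hnum : 0 ≤ 1 - x := sub_nonneg.2 hx
  have hexp := exp_nonneg (2 * tauFun J h x)
  have hden := add_nonneg hnum hexp
  exact ⟨div_nonneg hnum hden, div_le_one_of_le₀ (le_add_of_nonneg_right hexp) hden⟩

theorem Ltwo_eq_downProb {m : ℝ} (hm : m ≤ 1) :
    Ltwo J h m = 4 * (m ^ 2 * downProb J h m + (1 - m) ^ 2 * (1 - downProb J h m)) := by
  have hden : (1 - m) + exp (2 * tauFun J h m) ≠ 0 :=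
    (add_pos_of_nonneg_of_pos (sub_nonneg.2 hm) (exp_pos _)).ne'
  rw [Ltwo, downProb]
  field_simp
  ring

/-- `downProb` with its argument projected to `[0,1]`, which keeps it away from the poles that
`downProb` may have beyond `1`. -/
noncomputable def clampedDownProb (J h x : ℝ) : ℝ :=
  downProb J h (Set.projIcc 0 1 zero_le_one x)

theorem clampedDownProb_of_mem {x : ℝ} (hx : x ∈ Set.Icc (0 : ℝ) 1) :
    clampedDownProb J h x = downProb J h x := by
  rw [clampedDownProb, Set.projIcc_of_mem _ hx]

theorem exists_lipschitzWith_clampedDownProb (J h : ℝ) :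
    ∃ C, LipschitzWith C (clampedDownProb J h) := by
  obtain ⟨C, hC⟩ := contDiffOn_downProb (J := J) (h := h) |>.exists_lipschitzOnWith one_ne_zero
    (convex_Icc 0 1) isCompact_Icc
  exact ⟨C * 1, hC.to_restrict.comp (LipschitzWith.projIcc zero_le_one)⟩

/-- The conditional second moment as a function of the magnetization `m`. The arguments of
`clampedDownProb` leave `[0,1]` only if `m < 1/N` or `m > 1 - 1/N`; for an attainable `m` the
corresponding `edgeFraction` then vanishes. -/
noncomputable def secondMoment (N : ℕ) (J h m : ℝ) : ℝ :=
  4 * (edgeFraction N m * clampedDownProb J h (m - 1 / N) +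
    edgeFraction N (1 - m) * (1 - clampedDownProb J h (m + 1 / N)))

theorem condE2_eq_secondMoment (hN : N ≠ 0) {σ : Config N} (hσ : wConf N J h σ ≠ 0) :
    condE2 N J h (fun σ σ' => ((Msum σ : ℝ) - (Msum σ' : ℝ)) ^ 2) σ =
      secondMoment N J h (mConf σ) := by
  have hN0 : (N : ℝ) ≠ 0 := Nat.cast_ne_zero.2 hN
  have hlow : edgeFraction N (mConf σ) = 0 ∨ mConf σ - 1 / N ∈ Set.Icc (0 : ℝ) 1 := by
    rcases Nat.eq_zero_or_pos (Msum σ) with hM | hM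
    · simp [mConf, hM, edgeFraction]
    · rw [mConf, ← sub_div, ← Nat.cast_pred hM]
      exact .inr (unitInterval.div_mem (Nat.cast_nonneg _) N.cast_nonneg
        (Nat.cast_le.2 ((Nat.sub_le _ _).trans (Msum_le σ))))
  have hhigh : edgeFraction N (1 - mConf σ) = 0 ∨ mConf σ + 1 / N ∈ Set.Icc (0 : ℝ) 1 := by
    rcases (Msum_le σ).eq_or_lt with hM | hM
    · simp [mConf, hM, edgeFraction, hN0]
    · rw [mConf, ← add_div, ← Nat.cast_succ]
      exact .inr (unitInterval.div_mem (Nat.cast_nonneg _) N.cast_nonneg (Nat.cast_le.2 hM))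
  rw [condE2_eq_edgeFraction hN hσ, secondMoment]
  congr 2
  · rcases hlow with hzero | hmem
    · rw [hzero, zero_mul, zero_mul]
    · rw [clampedDownProb_of_mem hmem]
  · rcases hhigh with hzero | hmem
    · rw [hzero, zero_mul, zero_mul]
    · rw [clampedDownProb_of_mem hmem]

theorem abs_le_one_of_mem_Icc {x : ℝ} (hx : x ∈ Set.Icc (0 : ℝ) 1) : |x| ≤ 1 :=
  (abs_of_nonneg hx.1).trans_le hx.2

theorem abs_mul_sub_mul_le {a b p q δ η : ℝ} (hab : |a - b| ≤ δ) (hpq : |p - q| ≤ η)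
    (hp : |p| ≤ 1) (hb : |b| ≤ 1) : |a * p - b * q| ≤ δ + η :=
  calc |a * p - b * q| = |(a - b) * p + b * (p - q)| := by ring_nf
    _ ≤ |a - b| * |p| + |b| * |p - q| := by
      simpa only [abs_mul] using abs_add_le ((a - b) * p) (b * (p - q))
    _ ≤ |a - b| + |p - q| := add_le_add (mul_le_of_le_one_right (abs_nonneg _) hp)
      (mul_le_of_le_one_left (abs_nonneg _) hb)
    _ ≤ δ + η := add_le_add hab hpq

theorem abs_secondMoment_sub_Ltwo_le {C : NNReal} (hC : LipschitzWith C (clampedDownProb J h))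
    (hN : 1 ≤ N) {m : ℝ} (hm : m ∈ Set.Icc (0 : ℝ) 1) :
    |secondMoment N J h m - Ltwo J h m| ≤ 8 * (1 + C) / N := by
  have hm' : 1 - m ∈ Set.Icc (0 : ℝ) 1 := Set.Icc.one_sub_mem hm
  have hφ (x : ℝ) : clampedDownProb J h x ∈ Set.Icc (0 : ℝ) 1 :=
    downProb_mem_Icc (Set.projIcc 0 1 zero_le_one x).2.2
  have hsq {x : ℝ} (hx : x ∈ Set.Icc (0 : ℝ) 1) : |x ^ 2| ≤ 1 :=
    abs_le_one_of_mem_Icc ⟨sq_nonneg x, pow_le_one₀ hx.1 hx.2⟩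
  have hlow : |clampedDownProb J h (m - 1 / N) - downProb J h m| ≤ C * (1 / N) := by
    simpa [clampedDownProb_of_mem hm, Real.dist_eq] using hC.dist_le_mul (m - 1 / N) m
  have hhigh : |(1 - clampedDownProb J h (m + 1 / N)) - (1 - downProb J h m)| ≤ C * (1 / N) := by
    rw [sub_sub_sub_cancel_left, abs_sub_comm]
    simpa [clampedDownProb_of_mem hm, Real.dist_eq] using hC.dist_le_mul (m + 1 / N) m
  have hup := abs_mul_sub_mul_le (abs_edgeFraction_sub_sq_le hN hm) hlow
    (abs_le_one_of_mem_Icc (hφ _)) (hsq hm)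
  have hdown := abs_mul_sub_mul_le (abs_edgeFraction_sub_sq_le hN hm') hhigh
    (abs_le_one_of_mem_Icc (Set.Icc.one_sub_mem (hφ _))) (hsq hm')
  rw [secondMoment, Ltwo_eq_downProb hm.2, ← mul_sub, add_sub_add_comm, abs_mul,
    abs_of_pos four_pos]
  calc
    _ ≤ 4 * ((1 / N + C * (1 / N)) + (1 / N + C * (1 / N)) : ℝ) :=
      mul_le_mul_of_nonneg_left ((abs_add_le _ _).trans (add_le_add hup hdown)) zero_le_four
    _ = 8 * (1 + C) / N := by ring

end Remainder

theorem stmt6_general (J h : ℝ) :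
    ∃ K : ℝ, ∀ N : ℕ, 1 ≤ N →
      ∃ R₂ : ℝ → ℝ,
        (∀ m ∈ Set.Icc (0:ℝ) 1, |R₂ m| ≤ K / N) ∧
        ∀ σ : Config N, wConf N J h σ ≠ 0 →
          condE2 N J h (fun σ σ' => ((Msum σ : ℝ) - (Msum σ' : ℝ))^2) σ
            = Ltwo J h (mConf σ) + R₂ (mConf σ) := by
  obtain ⟨C, hC⟩ := exists_lipschitzWith_clampedDownProb J h
  refine ⟨8 * (1 + C), fun N hN => ⟨fun m => secondMoment N J h m - Ltwo J h m,
    fun m hm => abs_secondMoment_sub_Ltwo_le hC hN hm, fun σ hσ => ?_⟩⟩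
  rw [condE2_eq_secondMoment (Nat.one_le_iff_ne_zero.1 hN) hσ, add_sub_cancel]

/-- Second conditional moment of the exchangeable pair for the weighted
Curie–Weiss model: `E[(M - M')² | σ] = L₂(m(σ)) + R₂(m(σ))` with `|R₂(m)| ≤ K/N` on
`[0,1]`, for a constant `K = K(J,h)` independent of `N`. -/
theorem stmt6 (J h : ℝ) (hJ : 0 ≤ J) :
    ∃ K : ℝ, ∀ N : ℕ, 1 ≤ N →
      ∃ R₂ : ℝ → ℝ,
        (∀ m ∈ Set.Icc (0:ℝ) 1, |R₂ m| ≤ K / N) ∧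
        ∀ σ : Config N, wConf N J h σ ≠ 0 →
          condE2 N J h (fun σ σ' => ((Msum σ : ℝ) - (Msum σ' : ℝ))^2) σ
            = Ltwo J h (mConf σ) + R₂ (mConf σ) :=
  stmt6_general J h
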